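/- arXiv:2202.01278 — 2 statements merged into one kernel-verified Lean document; each statement's English description precedes it below -/
import Mathlib

section
/- Let m ∈ ℕ, let α > m−1, and let n ≥ m. Then for every x ∈ ℝ, e^{−x} · L^{II,(α)}_{m,n}(x) = −(α+n+1−2m) · ∫_x^∞ e^{−t} · L_m^{(−α−1)}(t) · L_{n−m}^{(α+1)}(t) dt (the improper integral converges since the integrand is e^{−t} times a polynomial). -/
open Finset MeasureTheory

/-- Generalized binomial coefficient `C(t, j) = t(t-1)⋯(t-j+1)/j!`. -/
noncomputable def genBinom (t : ℝ) (j : ℕ) : ℝ :=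
  (∏ i ∈ Finset.range j, (t - i)) / (Nat.factorial j)

/-- Generalized Laguerre polynomial `L_n^{(α)}(x)`, with the convention
`L_n^{(α)} = 0` for negative integer index `n`. -/
noncomputable def laguerre (α : ℝ) (n : ℤ) (x : ℝ) : ℝ :=
  if 0 ≤ n then
    ∑ k ∈ Finset.range (n.toNat + 1),
      ((-1 : ℝ) ^ k / (Nat.factorial k)) * genBinom ((n : ℝ) + α) (n.toNat - k) * x ^ k
  else 0

/-- Type-II exceptional `X_m`-Laguerre polynomial. -/
noncomputable def XLagII (m : ℕ) (α : ℝ) (n : ℕ) (x : ℝ) : ℝ :=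
  x * laguerre (-α - 1) (m : ℤ) x * laguerre (α + 2) ((n : ℤ) - m - 1) x
    + ((m : ℝ) - α - 1) * laguerre (-α - 2) (m : ℤ) x * laguerre (α + 1) ((n : ℤ) - m) x

open Polynomial in
/-- Laguerre polynomial as a `Polynomial`. -/
noncomputable def lagPoly (a : ℝ) (n : ℕ) : ℝ[X] :=
  ∑ k ∈ Finset.range (n + 1),
    Polynomial.monomial k (((-1 : ℝ) ^ k / (Nat.factorial k)) * genBinom ((n : ℝ) + a) (n - k))

theorem lagPoly_coeff (a : ℝ) (n k : ℕ) : (lagPoly a n).coeff k =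
    if k ≤ n then ((-1 : ℝ) ^ k / (Nat.factorial k)) * genBinom ((n : ℝ) + a) (n - k) else 0 := by
  simp only [lagPoly, Polynomial.finsetSum_coeff, Polynomial.coeff_monomial]
  rw [Finset.sum_ite_eq']
  simp [Nat.lt_succ_iff]

theorem laguerre_eq (a : ℝ) (n : ℕ) (x : ℝ) : laguerre a (n : ℤ) x = (lagPoly a n).eval x := by
  simp [laguerre, lagPoly, Polynomial.eval_finsetSum]

theorem genBinom_zero (t : ℝ) : genBinom t 0 = 1 := by simp [genBinom]

theorem genBinom_succ (t : ℝ) (j : ℕ) :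
    ((j : ℝ) + 1) * genBinom t (j + 1) = (t - j) * genBinom t j := by
  have h1 : (Nat.factorial j : ℝ) ≠ 0 := by positivity
  have h2 : (j : ℝ) + 1 ≠ 0 := by positivity
  simp only [genBinom, Finset.prod_range_succ, Nat.factorial_succ]
  push_cast
  field_simp

theorem genBinom_shift (t : ℝ) (j : ℕ) :
    (t - j) * genBinom t j = t * genBinom (t - 1) j := by
  have h : (t - j) * (∏ i ∈ Finset.range j, (t - i)) =
      t * ∏ i ∈ Finset.range j, (t - 1 - i) := by
    have h1 := Finset.prod_range_succ (fun i : ℕ => t - (i : ℝ)) j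
    have h2 := Finset.prod_range_succ' (fun i : ℕ => t - (i : ℝ)) j
    rw [h1] at h2
    rw [mul_comm, h2, mul_comm]
    congr 1
    · simp
    · apply Finset.prod_congr rfl
      intro i _
      push_cast
      ring
  simp only [genBinom]
  rw [← mul_div_assoc, h, mul_div_assoc]

theorem genBinom_pascal (t : ℝ) (j : ℕ) :
    genBinom t (j + 1) = genBinom (t - 1) (j + 1) + genBinom (t - 1) j := by
  have h2 : (j : ℝ) + 1 ≠ 0 := by positivity
  apply mul_left_cancel₀ h2
  rw [mul_add, genBinom_succ, genBinom_succ, genBinom_shift]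
  ring

open Polynomial in
theorem lag_id1 (a : ℝ) (n : ℕ) :
    X * derivative (lagPoly a n) =
      C (-a) * lagPoly a n + C (n + a) * lagPoly (a - 1) n := by
  ext k
  have key : (k : ℝ) * (lagPoly a n).coeff k =
      -a * (lagPoly a n).coeff k + (n + a) * (lagPoly (a - 1) n).coeff k := by
    simp only [lagPoly_coeff]
    split_ifs with h
    · obtain ⟨j, rfl⟩ := Nat.exists_eq_add_of_le h
      have := genBinom_shift (((k + j : ℕ) : ℝ) + a) j
      rw [Nat.add_sub_cancel_left, ← add_sub_assoc]
      push_cast at this ⊢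
      linear_combination ((-1 : ℝ) ^ k / (Nat.factorial k)) * this
    · simp
  rw [coeff_add, coeff_C_mul, coeff_C_mul, ← key]
  cases k with
  | zero => simp
  | succ k => rw [coeff_X_mul, coeff_derivative]; push_cast; ring

theorem fact_step (k : ℕ) : ((-1 : ℝ) ^ (k + 1) / (Nat.factorial (k + 1))) * (k + 1) =
    - ((-1 : ℝ) ^ k / (Nat.factorial k)) := by
  have h1 : (Nat.factorial k : ℝ) ≠ 0 := by positivity
  have h2 : (k : ℝ) + 1 ≠ 0 := by positivity
  rw [Nat.factorial_succ, pow_succ]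
  push_cast
  field_simp

open Polynomial in
theorem lag_id2 (a : ℝ) (n : ℕ) :
    lagPoly (a - 1) n - derivative (lagPoly (a - 1) n) = lagPoly a n := by
  ext k
  rw [coeff_sub, coeff_derivative]
  simp only [lagPoly_coeff]
  rcases lt_trichotomy k n with h | h | h
  · obtain ⟨j, rfl⟩ := Nat.exists_eq_add_of_lt h
    rw [if_pos (by omega), if_pos (by omega), if_pos (by omega)]
    have e1 : k + j + 1 - k = j + 1 := by omega
    have e2 : k + j + 1 - (k + 1) = j := by omega
    rw [e1, e2, ← add_sub_assoc, genBinom_pascal (((k + j + 1 : ℕ) : ℝ) + a)]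
    linear_combination (-genBinom (((k + j + 1 : ℕ) : ℝ) + a - 1) j) * fact_step k
  · subst h
    simp [genBinom_zero]
  · rw [if_neg (by omega), if_neg (by omega), if_neg (by omega)]
    simp

open Polynomial in
theorem lag_id3 (a : ℝ) (n : ℕ) :
    derivative (lagPoly a (n + 1)) = - lagPoly (a + 1) n := by
  ext k
  rw [coeff_neg, coeff_derivative]
  simp only [lagPoly_coeff]
  by_cases h : k ≤ n
  · rw [if_pos (by omega), if_pos h]
    have e2 : n + 1 - (k + 1) = n - k := by omega
    have e3 : ((n + 1 : ℕ) : ℝ) + a = n + (a + 1) := by push_cast; ring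
    rw [e2, e3]
    linear_combination (genBinom ((n : ℝ) + (a + 1)) (n - k)) * fact_step k
  · rw [if_neg (by omega), if_neg h]
    simp

open Polynomial in
theorem lag_ode (a : ℝ) (n : ℕ) :
    X * derivative (derivative (lagPoly a n)) + C (a + 1) * derivative (lagPoly a n)
      - X * derivative (lagPoly a n) + C (n : ℝ) * lagPoly a n = 0 := by
  ext k
  have key : ((k : ℝ) + 1) * (k + a + 1) * (lagPoly a n).coeff (k + 1)
      + (n - k) * (lagPoly a n).coeff k = 0 := by
    simp only [lagPoly_coeff]
    rcases lt_trichotomy k n with h | h | h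
    · obtain ⟨j, rfl⟩ := Nat.exists_eq_add_of_lt h
      rw [if_pos (by omega), if_pos (by omega)]
      have e1 : k + j + 1 - k = j + 1 := by omega
      have e2 : k + j + 1 - (k + 1) = j := by omega
      rw [e1, e2]
      have h3 := genBinom_succ (((k + j + 1 : ℕ) : ℝ) + a) j
      have h4 := fact_step k
      push_cast at h3 ⊢
      linear_combination ((k : ℝ) + a + 1) * (genBinom ((k : ℝ) + j + 1 + a) j) * h4
        + ((-1 : ℝ) ^ k / (Nat.factorial k)) * h3
    · subst h
      simp
    · rw [if_neg (by omega), if_neg (by omega)]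
      simp
  simp only [coeff_add, coeff_sub, coeff_C_mul, coeff_zero]
  cases k with
  | zero =>
    simp only [coeff_X_mul_zero, coeff_derivative]
    push_cast at key ⊢
    linear_combination key
  | succ k =>
    simp only [coeff_X_mul, coeff_derivative]
    push_cast at key ⊢
    linear_combination key

open Polynomial in
theorem poly_exp_tendsto (p : ℝ[X]) :
    Filter.Tendsto (fun t : ℝ => Real.exp (-t) * p.eval t) Filter.atTop (nhds 0) := by
  refine (Polynomial.tendsto_div_exp_atTop p).congr fun t => ?_
  rw [Real.exp_neg, div_eq_mul_inv, mul_comm]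

open Polynomial in
theorem poly_exp_integrable (p : ℝ[X]) (x : ℝ) :
    IntegrableOn (fun t : ℝ => Real.exp (-t) * p.eval t) (Set.Ioi x) := by
  refine integrable_of_isBigO_exp_neg (b := 1 / 2) (by norm_num) (by fun_prop) ?_
  have h := (poly_exp_tendsto (p.comp (C 2 * X))).comp
    (Filter.tendsto_id.atTop_mul_const (show (0 : ℝ) < 1 / 2 by norm_num))
  have h2 := (h.isBigO_one ℝ).mul (Asymptotics.isBigO_refl (fun t : ℝ => Real.exp (-(1/2) * t)) Filter.atTop)
  refine h2.congr' (Filter.Eventually.of_forall fun t => ?_) (Filter.Eventually.of_forall fun t => ?_)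
  · simp only [Function.comp, id, eval_comp, eval_mul, eval_C, eval_X]
    have e : (2 : ℝ) * (t * (1 / 2)) = t := by ring
    have e2 : Real.exp (-t) = Real.exp (-(t * (1 / 2))) * Real.exp (-(1/2) * t) := by
      rw [← Real.exp_add]; congr 1; ring
    rw [e, e2]; ring
  · simp

open Polynomial in
theorem stmt1 (m : ℕ) (α : ℝ) (hα : (m : ℝ) - 1 < α) (n : ℕ) (hmn : m ≤ n) :
    ∀ x : ℝ,
      Real.exp (-x) * XLagII m α n x =
        -(α + n + 1 - 2 * m) * ∫ t in Set.Ioi x,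
          Real.exp (-t) * laguerre (-α - 1) (m : ℤ) t * laguerre (α + 1) ((n : ℤ) - m) t := by
  intro x
  obtain ⟨k, rfl⟩ := Nat.exists_eq_add_of_le hmn
  have ek : ((m + k : ℕ) : ℤ) - m = (k : ℤ) := by push_cast; ring
  set A := lagPoly (-α - 1) m with hA
  set D := lagPoly (-α - 2) m with hD
  set B := lagPoly (α + 1) k with hB
  set P : ℝ[X] := -(X * A * derivative B) + C ((m : ℝ) - α - 1) * D * B with hP
  have hX : ∀ t, XLagII m α (m + k) t = P.eval t := by
    intro t
    have e : laguerre (α + 2) ((k : ℤ) - 1) t = - (derivative B).eval t := by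
      rw [hB]
      cases k with
      | zero => simp [laguerre, lagPoly]
      | succ j =>
        have : ((j + 1 : ℕ) : ℤ) - 1 = (j : ℤ) := by push_cast; ring
        rw [this, laguerre_eq, lag_id3, eval_neg, neg_neg, add_assoc]
        norm_num
    rw [XLagII, ek, e, laguerre_eq, laguerre_eq, laguerre_eq, hP]
    simp only [eval_add, eval_neg, eval_mul, eval_X, eval_C, ← hA, ← hB, ← hD]
    ring
  have i1 := lag_id1 (-α - 1) m
  have i2 := lag_id2 (-α - 1) m
  have i4 := lag_ode (α + 1) k
  have e3 : -α - 1 - 1 = -α - 2 := by ring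
  rw [e3] at i1 i2
  rw [← hA, ← hD] at i1 i2
  rw [← hB] at i4
  have hd : derivative P - P = C (α + (m + k : ℕ) + 1 - 2 * m) * (A * B) := by
    rw [hP]
    simp only [derivative_add, derivative_neg, derivative_mul, derivative_X, derivative_C]
    simp only [map_add, map_sub, map_neg, map_mul, map_natCast, map_one, map_ofNat, Nat.cast_add]
      at i1 i2 i4 ⊢
    linear_combination (-derivative B) * i1 - (C α + 1 - (m : ℝ[X])) * (-B) * i2 - A * i4
  have hder : ∀ t, HasDerivAt (fun t => Real.exp (-t) * P.eval t)
      (Real.exp (-t) * (derivative P - P).eval t) t := by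
    intro t
    have := ((hasDerivAt_neg t).exp).mul (P.hasDerivAt t)
    refine this.congr_deriv ?_
    rw [eval_sub]; ring
  have hI := integral_Ioi_of_hasDerivAt_of_tendsto' (a := x) (fun t _ => hder t)
    (poly_exp_integrable _ x) (poly_exp_tendsto P)
  rw [hX, ek]
  simp only [laguerre_eq, ← hA, ← hB]
  rw [hd] at hI
  simp only [eval_mul, eval_C] at hI
  have e5 : ∀ t, Real.exp (-t) * ((α + (m + k : ℕ) + 1 - 2 * m) * (A.eval t * B.eval t)) =
    (α + (m + k : ℕ) + 1 - 2 * m) * (Real.exp (-t) * A.eval t * B.eval t) := fun t => by ring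
  simp only [e5] at hI
  rw [integral_const_mul] at hI
  linarith
end

section
/- Let m ∈ ℕ and let α, β ∈ ℝ satisfy β > 0, α+1−m > 0, and α+1−m−β ∉ {0,1,…,m−1}, and let n ≥ m. Then the polynomial identity (1+x)·(d/dx)P^{(α,β)}_{m,n}(x) + β·P^{(α,β)}_{m,n}(x) = (−1)^m·((β+n)(α+n−2m+1)/(α+n−m+1))·P_{n−m}^{(α+1,β−1)}(x)·P_m^{(−α−1,β−1)}(x) holds for all x. -/
open Finset

/-- Jacobi polynomial `P_n^{(α,β)}(x)` for arbitrary real parameters, with the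
convention `P_n^{(α,β)} = 0` for negative integer index `n`. -/
noncomputable def jacobi (α β : ℝ) (n : ℤ) (x : ℝ) : ℝ :=
  if 0 ≤ n then
    (Nat.factorial n.toNat : ℝ)⁻¹ *
      ∑ k ∈ Finset.range (n.toNat + 1),
        (n.toNat.choose k : ℝ) *
          (∏ i ∈ Finset.Ico k n.toNat, (α + i + 1)) *
          (∏ i ∈ Finset.range k, (α + β + (n : ℝ) + 1 + i)) *
          ((x - 1) / 2) ^ k
  else 0

/-- Exceptional `X_m`-Jacobi polynomial. -/
noncomputable def XJac (m : ℕ) (α β : ℝ) (n : ℕ) (x : ℝ) : ℝ :=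
  ((-1 : ℝ) ^ m / (α + 1 + n - m)) *
    ((x - 1) * (1 + α + β + n - m) / 2 *
        jacobi (-α - 1) (β - 1) (m : ℤ) x * jacobi (α + 2) β ((n : ℤ) - m - 1) x
      + (α + 1 - m) * jacobi (-α - 2) β (m : ℤ) x * jacobi (α + 1) (β - 1) ((n : ℤ) - m) x)

/-- Coefficients of the Jacobi polynomial in powers of `(x-1)/2`. -/
noncomputable def jc (a b : ℝ) (n k : ℕ) : ℝ :=
  (Nat.factorial n : ℝ)⁻¹ * ((n.choose k : ℝ) * (∏ i ∈ Finset.Ico k n, (a + i + 1)) *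
    (∏ i ∈ Finset.range k, (a + b + (n : ℝ) + 1 + i)))

/-- The Jacobi polynomial in the variable `(x-1)/2`. -/
noncomputable def jp (a b : ℝ) (n : ℕ) : Polynomial ℝ :=
  ∑ k ∈ Finset.range (n + 1), Polynomial.monomial k (jc a b n k)

lemma jp_coeff (a b : ℝ) (n k : ℕ) : (jp a b n).coeff k = jc a b n k := by
  simp only [jp, Polynomial.finsetSum_coeff, Polynomial.coeff_monomial,
    Finset.sum_ite_eq', Finset.mem_range]
  split_ifs with h
  · rfl
  · simp [jc, Nat.choose_eq_zero_of_lt (show n < k by omega)]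

lemma jacobi_eq (a b : ℝ) (n : ℕ) (x : ℝ) :
    jacobi a b (n : ℤ) x = (jp a b n).eval ((x - 1) / 2) := by
  simp only [jacobi, jp, Polynomial.eval_finsetSum, Polynomial.eval_monomial, jc]
  simp [Finset.mul_sum, mul_assoc]

lemma jc_rec (a b : ℝ) (n k : ℕ) :
    ((k : ℝ) + 1) * (k + a + 1) * jc a b n (k + 1) =
      ((n : ℝ) - k) * (n + k + a + b + 1) * jc a b n k := by
  rcases lt_trichotomy k n with h | h | h
  · have h1 := Nat.choose_succ_right_eq n k
    have h2 : ((n.choose (k + 1) : ℕ) : ℝ) * (k + 1) = (n.choose k) * ((n : ℝ) - k) := by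
      rw [← Nat.cast_sub h.le]; exact_mod_cast h1
    simp only [jc]
    rw [Finset.prod_range_succ, Finset.prod_eq_prod_Ico_succ_bot h]
    linear_combination (Nat.factorial n : ℝ)⁻¹ * (k + a + 1) *
      (∏ i ∈ Finset.Ico (k + 1) n, (a + i + 1)) *
      (∏ i ∈ Finset.range k, (a + b + (n : ℝ) + 1 + i)) * (a + b + n + 1 + k) * h2
  · subst h; simp [jc]
  · simp [jc, Nat.choose_eq_zero_of_lt h, Nat.choose_eq_zero_of_lt (show n < k + 1 by omega)]

lemma prod_shift (a : ℝ) (n k : ℕ) (h : k ≤ n) :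
    ((k : ℝ) + a) * ∏ i ∈ Finset.Ico k n, (a + i + 1) =
      (a + n) * ∏ i ∈ Finset.Ico k n, (a - 1 + i + 1) := by
  induction n, h using Nat.le_induction with
  | base => simp [add_comm]
  | succ n h ih =>
    rw [Finset.prod_Ico_succ_top h, Finset.prod_Ico_succ_top h, ← mul_assoc, ih]
    push_cast; ring

lemma jc_shift (a b : ℝ) (n k : ℕ) :
    ((k : ℝ) + a) * jc a b n k = (a + n) * jc (a - 1) (b + 1) n k := by
  rcases le_or_gt k n with h | h
  · have := prod_shift a n k h
    simp only [jc, show a - 1 + (b + 1) = a + b by ring]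
    linear_combination (Nat.factorial n : ℝ)⁻¹ * (n.choose k : ℝ) *
      (∏ i ∈ Finset.range k, (a + b + (n : ℝ) + 1 + i)) * this
  · simp [jc, Nat.choose_eq_zero_of_lt h]

lemma jc_deriv (a b : ℝ) (n k : ℕ) :
    ((k : ℝ) + 1) * jc a b (n + 1) (k + 1) =
      (a + b + n + 2) * jc (a + 1) (b + 1) n k := by
  have h2 : ((n + 1 : ℕ) : ℝ) * (n.choose k) = ((n + 1).choose (k + 1)) * ((k : ℝ) + 1) := by
    exact_mod_cast Nat.add_one_mul_choose_eq n k
  have hp : ∏ i ∈ Finset.Ico (k + 1) (n + 1), (a + i + 1)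
      = ∏ i ∈ Finset.Ico k n, (a + 1 + i + 1) := by
    rw [← Finset.prod_Ico_add' (fun i : ℕ => a + (i : ℝ) + 1) k n 1]
    refine Finset.prod_congr rfl fun i _ => ?_
    push_cast; ring
  have hq : ∏ i ∈ Finset.range k, (a + b + ((n + 1 : ℕ) : ℝ) + 1 + ((i + 1 : ℕ) : ℝ))
      = ∏ i ∈ Finset.range k, (a + 1 + (b + 1) + (n : ℝ) + 1 + i) := by
    refine Finset.prod_congr rfl fun i _ => ?_
    push_cast; ring
  simp only [jc]
  rw [Finset.prod_range_succ', hp, hq, Nat.factorial_succ]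
  have h3 : ((n : ℝ) + 1) ≠ 0 := by positivity
  have h4 : (Nat.factorial n : ℝ) ≠ 0 := by positivity
  push_cast at h2 ⊢
  field_simp
  linear_combination (-(a + b + n + 2) * (∏ i ∈ Finset.Ico k n, (a + 1 + i + 1)) *
    ∏ i ∈ Finset.range k, (a + 1 + (b + 1) + (n : ℝ) + 1 + i)) * h2

open Polynomial in
lemma jp_deriv (a b : ℝ) (n : ℕ) :
    derivative (jp a b (n + 1)) = C (a + b + n + 2) * jp (a + 1) (b + 1) n := by
  ext k
  rw [coeff_derivative, coeff_C_mul, jp_coeff, jp_coeff]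
  linear_combination jc_deriv a b n k

open Polynomial in
lemma jp_shift (a b : ℝ) (n : ℕ) :
    X * derivative (jp a b n) + C a * jp a b n = C (a + n) * jp (a - 1) (b + 1) n := by
  ext k
  rw [coeff_add, coeff_C_mul, coeff_C_mul, jp_coeff, jp_coeff]
  cases k with
  | zero =>
    have := jc_shift a b n 0
    simpa using this
  | succ k =>
    rw [coeff_X_mul, coeff_derivative, jp_coeff]
    have := jc_shift a b n (k + 1)
    push_cast at this
    linear_combination this

open Polynomial in
lemma jp_ode (a b : ℝ) (n : ℕ) :
    X * derivative (derivative (jp a b n)) + X * (X * derivative (derivative (jp a b n)))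
      + C (a + 1) * derivative (jp a b n) + C (a + b + 2) * (X * derivative (jp a b n))
      = C (n * (n + a + b + 1)) * jp a b n := by
  ext k
  have := jc_rec a b n k
  rcases k with _ | _ | k
  · simp only [coeff_add, coeff_C_mul, coeff_X_mul_zero, coeff_derivative, jp_coeff]
    push_cast at this ⊢
    linear_combination this
  · simp only [coeff_add, coeff_C_mul, coeff_X_mul_zero, coeff_X_mul, coeff_derivative, jp_coeff]
    push_cast at this ⊢
    linear_combination this
  · simp only [coeff_add, coeff_C_mul, coeff_X_mul, coeff_derivative, jp_coeff]
    push_cast at this ⊢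
    linear_combination this

theorem stmt9 (m : ℕ) (α β : ℝ) (hβ : 0 < β) (hα : 0 < α + 1 - m)
    (hexc : ∀ k : ℕ, k < m → α + 1 - m - β ≠ k) (n : ℕ) (hmn : m ≤ n) :
    ∀ x : ℝ,
      (1 + x) * deriv (XJac m α β n) x + β * XJac m α β n x =
        (-1 : ℝ) ^ m * ((β + n) * (α + n - 2 * m + 1) / (α + n - m + 1)) *
          jacobi (α + 1) (β - 1) ((n : ℤ) - m) x * jacobi (-α - 1) (β - 1) (m : ℤ) x := by
  obtain ⟨N, rfl⟩ := Nat.exists_eq_add_of_le hmn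
  have hN : ((m + N : ℕ) : ℤ) - m = (N : ℤ) := by push_cast; ring
  set q := jp (-α - 1) (β - 1) m with hq
  set r := jp (α + 1) (β - 1) N with hr
  -- first term
  have h1 : ∀ x : ℝ, (1 + α + β + N) * jacobi (α + 2) β ((N : ℤ) - 1) x
      = (Polynomial.derivative r).eval ((x - 1) / 2) := by
    intro x
    rcases N with _ | N
    · simp [jacobi, hr, jp]
    · rw [hr, jp_deriv, show ((N + 1 : ℕ) : ℤ) - 1 = (N : ℤ) by push_cast; ring, jacobi_eq,
        Polynomial.eval_mul, Polynomial.eval_C, show α + 1 + 1 = α + 2 by ring,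
        show β - 1 + 1 = β by ring]
      push_cast; ring
  have h2 : ∀ x : ℝ, (α + 1 - m) * jacobi (-α - 2) β (m : ℤ) x
      = (α + 1) * q.eval ((x - 1) / 2)
        - (x - 1) / 2 * (Polynomial.derivative q).eval ((x - 1) / 2) := by
    intro x
    have := congrArg (Polynomial.eval ((x - 1) / 2)) (jp_shift (-α - 1) (β - 1) m)
    rw [show -α - 1 - 1 = -α - 2 by ring, show β - 1 + 1 = β by ring] at this
    simp only [Polynomial.eval_add, Polynomial.eval_mul, Polynomial.eval_C,
      Polynomial.eval_X] at this
    rw [jacobi_eq]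
    linear_combination this
  set W : Polynomial ℝ := Polynomial.X * (q * Polynomial.derivative r)
    - Polynomial.X * (Polynomial.derivative q * r) + Polynomial.C (α + 1) * (q * r) with hW
  have hX : XJac m α β (m + N) =
      fun x => ((-1 : ℝ) ^ m / (α + N + 1)) * W.eval ((x - 1) / 2) := by
    funext x
    simp only [XJac, hN, hW]
    rw [h2, jacobi_eq, jacobi_eq]
    have := h1 x
    simp only [Polynomial.eval_add, Polynomial.eval_sub, Polynomial.eval_mul, Polynomial.eval_C,
      Polynomial.eval_X]
    push_cast
    rw [show α + 1 + (m + N : ℝ) - m = α + N + 1 by ring]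
    rw [← this]
    ring
  intro x
  have hd : deriv (XJac m α β (m + N)) x = ((-1 : ℝ) ^ m / (α + N + 1)) *
      ((Polynomial.derivative W).eval ((x - 1) / 2) * (1 / 2)) := by
    rw [hX]
    have hl : HasDerivAt (fun x : ℝ => (x - 1) / 2) (1 / 2) x :=
      ((hasDerivAt_id x).sub_const 1).div_const 2
    exact (((W.hasDerivAt ((x - 1) / 2)).comp x hl).const_mul _).deriv
  rw [hd, hX, hN, jacobi_eq, jacobi_eq]
  have e1 := congrArg (Polynomial.eval ((x - 1) / 2)) (jp_ode (-α - 1) (β - 1) m)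
  have e2 := congrArg (Polynomial.eval ((x - 1) / 2)) (jp_ode (α + 1) (β - 1) N)
  rw [← hq] at e1 ⊢
  rw [← hr] at e2 ⊢
  simp only [hW, Polynomial.eval_add, Polynomial.eval_sub, Polynomial.eval_mul, Polynomial.eval_C,
      Polynomial.eval_X, Polynomial.derivative_add, Polynomial.derivative_sub,
      Polynomial.derivative_mul, Polynomial.derivative_C, Polynomial.derivative_X,
      Polynomial.eval_zero, Polynomial.eval_one] at e1 e2 ⊢
  obtain ⟨t, ht⟩ : ∃ t, t = (x - 1) / 2 := ⟨_, rfl⟩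
  obtain rfl : x = 2 * t + 1 := by rw [ht]; ring
  rw [← ht] at e1 e2 ⊢
  push_cast
  rw [show α + (m + N : ℝ) - m + 1 = α + N + 1 by ring, div_eq_mul_inv, div_eq_mul_inv]
  linear_combination ((-1 : ℝ) ^ m * (α + N + 1)⁻¹) * (q.eval t * e2 - r.eval t * e1)
end
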